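/- Let p be a probability density on ℝ^d, and let q_{σ0} : ℝ^d × ℝ^d → ℝ be a kernel such that q_{σ0}(x̃|x) > 0 for all x, x̃, for each fixed x the map x̃ ↦ q_{σ0}(x̃|x) is a differentiable probability density, and the smoothed density p_{σ0}(x̃) = ∫ q_{σ0}(x̃|x) p(x) dx is positive, differentiable, and satisfies ∇_{x̃} p_{σ0}(x̃) = ∫ p(x) ∇_{x̃} q_{σ0}(x̃|x) dx for all x̃ (differentiation under the integral). Define the posterior kernel q_{σ0}(x|x̃) = p(x) q_{σ0}(x̃|x) / p_{σ0}(x̃). Let p_M be a probability density on ℝ^d. For a measurable model score g : ℝ^d → ℝ^d define L_MSM(g) = ∫ p_M(x̃) ‖∇ log p_{σ0}(x̃) + g(x̃)‖² dx̃ and L_MDSM*(g) = ∫∫ p_M(x̃) q_{σ0}(x|x̃) ‖∇_{x̃} log q_{σ0}(x̃|x) + g(x̃)‖² dx dx̃. Then, for any two model scores g₁, g₂ for which all four integrals are finite, L_MSM(g₁) − L_MSM(g₂) = L_MDSM*(g₁) − L_MDSM*(g₂); that is, L_MSM and L_MDSM* differ by a constant that does not depend on the model score. -/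

import Mathlib

open MeasureTheory

/-!
Fix `xt` and let `w x = p x * q xt x / p0 xt` be the posterior density, which integrates to `1`,
and `s x = ∇ log q(xt|x)`. Since `w x • s x = p x • ∇ q(xt|x) / p0 xt`, differentiation under the
integral says that the posterior mean of `s` is `∇ log p0 xt` (Fisher's identity). In the
difference `‖s + g₁‖² - ‖s + g₂‖²` the quadratic term `‖s‖²` cancels, leaving an affine function
of `s`, so its posterior average equals the same expression evaluated at the mean of `s`
(`integral_weighted_sq_sub`). Integrating this against `pM` and using Fubini gives the result.

No joint measurability of `q` is assumed, and the Bochner integral of a nonintegrable function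
is `0`, so integrability of `w • s` has to be established: measurability in `x` comes from
writing `p x • ∇ q(xt|x)` through limits of difference quotients
(`aestronglyMeasurable_smul_gradient`), and the bound comes from finiteness of the fibre
integrals of `w ‖s + g₁‖²` (`integrable_smul_of_sq`).
-/

/-- Averaging `‖s + a‖² - ‖s + b‖²` against a weight of total mass one only sees the mean
of `s`. -/
lemma integral_weighted_sq_sub {α E : Type*} [MeasurableSpace α] {μ : Measure α}
    [NormedAddCommGroup E] [InnerProductSpace ℝ E] [CompleteSpace E]
    (w : α → ℝ) (s : α → E) (a b : E) (hw : Integrable w μ) (hw1 : ∫ x, w x ∂μ = 1)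
    (hs : Integrable (fun x => w x • s x) μ)
    (ha : Integrable (fun x => w x * ‖s x + a‖ ^ 2) μ)
    (hb : Integrable (fun x => w x * ‖s x + b‖ ^ 2) μ) :
    (∫ x, w x * ‖s x + a‖ ^ 2 ∂μ) - ∫ x, w x * ‖s x + b‖ ^ 2 ∂μ =
      ‖(∫ x, w x • s x ∂μ) + a‖ ^ 2 - ‖(∫ x, w x • s x ∂μ) + b‖ ^ 2 := by
  rw [← integral_sub ha hb]
  have h : ∀ x, w x * ‖s x + a‖ ^ 2 - w x * ‖s x + b‖ ^ 2 =
      2 * inner ℝ (a - b) (w x • s x) + w x * (‖a‖ ^ 2 - ‖b‖ ^ 2) := by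
    intro x
    rw [norm_add_sq_real, norm_add_sq_real, inner_smul_right, inner_sub_left,
      real_inner_comm a, real_inner_comm b]
    ring
  simp_rw [h]
  rw [integral_add ((hs.const_inner (a - b)).const_mul 2) (hw.mul_const _), integral_const_mul,
    integral_inner hs, integral_mul_const, hw1, norm_add_sq_real, norm_add_sq_real,
    inner_sub_left, real_inner_comm a, real_inner_comm b]
  ring

/-- A finite weighted second moment of `s + a` gives a finite weighted first moment of `s`. -/
lemma integrable_smul_of_sq {α E : Type*} [MeasurableSpace α] {μ : Measure α}
    [NormedAddCommGroup E] [NormedSpace ℝ E]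
    (w : α → ℝ) (s : α → E) (a : E) (hw : Integrable w μ) (hw0 : ∀ x, 0 ≤ w x)
    (hs : AEStronglyMeasurable (fun x => w x • s x) μ)
    (ha : Integrable (fun x => w x * ‖s x + a‖ ^ 2) μ) :
    Integrable (fun x => w x • s x) μ := by
  refine ((hw.mul_const (1 + ‖a‖)).add ha).mono' hs (Filter.Eventually.of_forall fun x => ?_)
  rw [norm_smul, Real.norm_of_nonneg (hw0 x), Pi.add_apply, ← mul_add]
  refine mul_le_mul_of_nonneg_left ?_ (hw0 x)
  have h1 : ‖s x‖ ≤ ‖s x + a‖ + ‖a‖ := by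
    simpa using norm_sub_le (s x + a) a
  nlinarith [sq_nonneg (‖s x + a‖ - 1), sq_nonneg ‖s x + a‖]

/-- The weighted gradient is measurable in the parameter `x`, because its coordinates are
pointwise limits of difference quotients. -/
lemma aestronglyMeasurable_smul_gradient {d : ℕ}
    (p : EuclideanSpace ℝ (Fin d) → ℝ)
    (q : EuclideanSpace ℝ (Fin d) → EuclideanSpace ℝ (Fin d) → ℝ)
    (hq_diff : ∀ x, Differentiable ℝ (fun xt => q xt x))
    (hm : ∀ xt, AEStronglyMeasurable (fun x => q xt x * p x) volume)
    (xt : EuclideanSpace ℝ (Fin d)) :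
    AEStronglyMeasurable (fun x => p x • gradient (fun y => q y x) xt) volume := by
  let e := EuclideanSpace.basisFun (Fin d) ℝ
  have key : ∀ i, AEStronglyMeasurable
      (fun x => p x * inner ℝ (e i) (gradient (fun y => q y x) xt)) volume := by
    intro i
    refine aestronglyMeasurable_of_tendsto_ae (Filter.atTop : Filter ℝ)
      (f := fun c x => c * (q (xt + c⁻¹ • e i) x * p x - q xt x * p x))
      (fun c => ((hm _).sub (hm _)).const_mul c) (Filter.Eventually.of_forall fun x => ?_)
    have h1 := ((hq_diff x xt).hasGradientAt.hasFDerivAt.lim_real (e i)).const_mul (p x)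
    rw [InnerProductSpace.toDual_apply_apply, real_inner_comm] at h1
    refine h1.congr fun c => ?_
    simp only [smul_eq_mul]
    ring
  have hsum : (fun x => p x • gradient (fun y => q y x) xt) =
      fun x => ∑ i, (p x * inner ℝ (e i) (gradient (fun y => q y x) xt)) • e i := by
    funext x
    conv_lhs => rw [← e.sum_repr' (gradient (fun y => q y x) xt)]
    simp only [Finset.smul_sum, smul_smul]
  rw [hsum]
  exact Finset.aestronglyMeasurable_fun_sum _ fun i _ => (key i).smul_const _

lemma HasGradientAt.real_log {E : Type*} [NormedAddCommGroup E] [InnerProductSpace ℝ E]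
    [CompleteSpace E] {f : E → ℝ} {v x : E} (h : HasGradientAt f v x) (hx : f x ≠ 0) :
    HasGradientAt (fun y => Real.log (f y)) ((f x)⁻¹ • v) x := by
  rw [hasGradientAt_iff_hasFDerivAt] at h ⊢
  simpa using h.log hx

/-- Under differentiation-under-the-integral for the smoothed density
`p0(xt) = ∫ q(xt|x) p(x) dx` of a data density `p` under a positive differentiable kernel
`q xt x = q(xt|x)`, the multiscale score matching objective `L_MSM` and the objective
`L_MDSM*` (with posterior kernel `q(x|xt) = p(x) q(xt|x) / p0(xt)`) differ by a constant
independent of the model score: `L_MSM g₁ - L_MSM g₂ = L_MDSM* g₁ - L_MDSM* g₂`. -/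
theorem msm_eq_mdsm_star_up_to_const
    (d : ℕ) (hd : 0 < d)
    (p : EuclideanSpace ℝ (Fin d) → ℝ)
    (hp_meas : Measurable p) (hp_nonneg : ∀ x, 0 ≤ p x) (hp_int : ∫ x, p x = 1)
    (q : EuclideanSpace ℝ (Fin d) → EuclideanSpace ℝ (Fin d) → ℝ)
    -- `q xt x` is the kernel `q_{σ₀}(xt | x)`
    (hq_pos : ∀ xt x, 0 < q xt x)
    (hq_diff : ∀ x, Differentiable ℝ (fun xt => q xt x))
    (hq_density : ∀ x, ∫ xt, q xt x = 1)
    (p0 : EuclideanSpace ℝ (Fin d) → ℝ)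
    (hp0_def : ∀ xt, p0 xt = ∫ x, q xt x * p x)
    (hp0_pos : ∀ xt, 0 < p0 xt)
    (hp0_grad : ∀ xt, HasGradientAt p0
      (∫ x, p x • gradient (fun y => q y x) xt) xt)
    (pM : EuclideanSpace ℝ (Fin d) → ℝ)
    (hpM_meas : Measurable pM) (hpM_nonneg : ∀ x, 0 ≤ pM x) (hpM_int : ∫ x, pM x = 1)
    (g₁ g₂ : EuclideanSpace ℝ (Fin d) → EuclideanSpace ℝ (Fin d))
    (hg₁ : Measurable g₁) (hg₂ : Measurable g₂)
    (hMSM₁ : Integrable (fun xt =>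
      pM xt * ‖gradient (fun y => Real.log (p0 y)) xt + g₁ xt‖ ^ 2))
    (hMSM₂ : Integrable (fun xt =>
      pM xt * ‖gradient (fun y => Real.log (p0 y)) xt + g₂ xt‖ ^ 2))
    (hMDSM₁ : Integrable (fun z : EuclideanSpace ℝ (Fin d) × EuclideanSpace ℝ (Fin d) =>
      pM z.2 * (p z.1 * q z.2 z.1 / p0 z.2) *
        ‖gradient (fun y => Real.log (q y z.1)) z.2 + g₁ z.2‖ ^ 2))
    (hMDSM₂ : Integrable (fun z : EuclideanSpace ℝ (Fin d) × EuclideanSpace ℝ (Fin d) =>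
      pM z.2 * (p z.1 * q z.2 z.1 / p0 z.2) *
        ‖gradient (fun y => Real.log (q y z.1)) z.2 + g₂ z.2‖ ^ 2)) :
    (∫ xt, pM xt * ‖gradient (fun y => Real.log (p0 y)) xt + g₁ xt‖ ^ 2) -
      (∫ xt, pM xt * ‖gradient (fun y => Real.log (p0 y)) xt + g₂ xt‖ ^ 2) =
    (∫ z : EuclideanSpace ℝ (Fin d) × EuclideanSpace ℝ (Fin d),
        pM z.2 * (p z.1 * q z.2 z.1 / p0 z.2) *
          ‖gradient (fun y => Real.log (q y z.1)) z.2 + g₁ z.2‖ ^ 2) -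
      (∫ z : EuclideanSpace ℝ (Fin d) × EuclideanSpace ℝ (Fin d),
        pM z.2 * (p z.1 * q z.2 z.1 / p0 z.2) *
          ‖gradient (fun y => Real.log (q y z.1)) z.2 + g₂ z.2‖ ^ 2) := by
  have hqp_int : ∀ xt, Integrable (fun x => q xt x * p x) := fun xt =>
    Integrable.of_integral_ne_zero (by rw [← hp0_def]; exact (hp0_pos xt).ne')
  have hw_int : ∀ xt, Integrable (fun x => p x * q xt x / p0 xt) := fun xt => by
    simpa only [mul_comm] using (hqp_int xt).div_const (p0 xt)
  have hw_one : ∀ xt, ∫ x, p x * q xt x / p0 xt = 1 := fun xt => by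
    simp_rw [mul_comm (p _)]
    rw [integral_div, ← hp0_def, div_self (hp0_pos xt).ne']
  have hws : ∀ xt x, (p x * q xt x / p0 xt) • gradient (fun y => Real.log (q y x)) xt =
      (p0 xt)⁻¹ • (p x • gradient (fun y => q y x) xt) := fun xt x => by
    rw [((hq_diff x xt).hasGradientAt.real_log (hq_pos xt x).ne').gradient, smul_smul, smul_smul]
    congr 1
    have := (hq_pos xt x).ne'
    field_simp
  -- Fisher's identity; both sides use the same (possibly junk) integral, so no integrability
  -- is needed here.
  have hmean : ∀ xt, ∫ x, (p x * q xt x / p0 xt) • gradient (fun y => Real.log (q y x)) xt =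
      gradient (fun y => Real.log (p0 y)) xt := fun xt => by
    simp_rw [hws]
    rw [integral_smul, ((hp0_grad xt).real_log (hp0_pos xt).ne').gradient]
  have hmeas : ∀ xt, AEStronglyMeasurable
      (fun x => (p x * q xt x / p0 xt) • gradient (fun y => Real.log (q y x)) xt) volume :=
    fun xt => by
      simp_rw [hws]
      exact (aestronglyMeasurable_smul_gradient p q hq_diff
        (fun y => (hqp_int y).aestronglyMeasurable) xt).const_smul (p0 xt)⁻¹
  rw [Measure.volume_eq_prod] at hMDSM₁ hMDSM₂ ⊢
  rw [integral_prod_symm _ hMDSM₁, integral_prod_symm _ hMDSM₂, ← integral_sub hMSM₁ hMSM₂,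
    ← integral_sub hMDSM₁.integral_prod_right hMDSM₂.integral_prod_right]
  refine integral_congr_ae ?_
  filter_upwards [hMDSM₁.prod_left_ae, hMDSM₂.prod_left_ae] with xt h₁ h₂
  simp only [mul_assoc (pM xt)] at h₁ h₂ ⊢
  rw [integral_const_mul, integral_const_mul, ← mul_sub, ← mul_sub]
  -- Where `pM` vanishes the fibre integrals need not be finite, but both sides are zero.
  rcases eq_or_ne (pM xt) 0 with h0 | h0
  · simp [h0]
  have h₁' := (integrable_const_mul_iff (IsUnit.mk0 _ h0) _).1 h₁
  have h₂' := (integrable_const_mul_iff (IsUnit.mk0 _ h0) _).1 h₂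
  have hs := integrable_smul_of_sq _ _ (g₁ xt) (hw_int xt)
    (fun x => div_nonneg (mul_nonneg (hp_nonneg x) (hq_pos xt x).le) (hp0_pos xt).le)
    (hmeas xt) h₁'
  rw [integral_weighted_sq_sub _ _ _ _ (hw_int xt) (hw_one xt) hs h₁' h₂', hmean]
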